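/- There exists a constant K̃ > 0 such that for every β with 2 < β < 3, 0 ≤ 1/E(β) − 2 ≤ K̃·(β − 2)·(1 + |log(β − 2)|). -/

import Mathlib

/-- The orbit of `1` under the β-map `T_β(x) = βx mod 1`: `t₀ = 1`,
`t_{n+1} = β t_n − ⌊β t_n⌋`. -/
noncomputable def betaOrbit (β : ℝ) : ℕ → ℝ
  | 0 => 1
  | n + 1 => Int.fract (β * betaOrbit β n)

/-- `E(β) = (∑ t_n(β)²/(2βⁿ)) / (∑ t_n(β)/βⁿ)`, the expectation of the unique acim of
the β-map. -/
noncomputable def Ebeta (β : ℝ) : ℝ :=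
  (∑' n : ℕ, (betaOrbit β n) ^ 2 / (2 * β ^ n)) / (∑' n : ℕ, betaOrbit β n / β ^ n)

theorem betaOrbit_nonneg (β : ℝ) (n : ℕ) : 0 ≤ betaOrbit β n := by
  cases n with
  | zero => simp [betaOrbit]
  | succ n => exact Int.fract_nonneg _

theorem betaOrbit_le_one (β : ℝ) (n : ℕ) : betaOrbit β n ≤ 1 := by
  cases n with
  | zero => simp [betaOrbit]
  | succ n => exact (Int.fract_lt_one _).le

theorem fract_le_self_of_nonneg (x : ℝ) (hx : 0 ≤ x) : Int.fract x ≤ x := by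
  have h1 : (0 : ℤ) ≤ ⌊x⌋ := Int.floor_nonneg.mpr hx
  have h2 : (0 : ℝ) ≤ (⌊x⌋ : ℝ) := by exact_mod_cast h1
  have h3 := Int.floor_add_fract x
  linarith

theorem betaOrbit_succ_le (β : ℝ) (h2 : 2 < β) (h3 : β < 3) (n : ℕ) :
    betaOrbit β (n + 1) ≤ β ^ n * (β - 2) := by
  induction n with
  | zero =>
    have hf : ⌊β⌋ = 2 := by
      rw [Int.floor_eq_iff]
      constructor <;> push_cast <;> linarith
    have h := Int.floor_add_fract β
    rw [hf] at h
    push_cast at h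
    simp only [betaOrbit, mul_one, pow_zero, one_mul]
    linarith
  | succ n ih =>
    have h0 := betaOrbit_nonneg β (n + 1)
    have hb : 0 ≤ β := by linarith
    calc betaOrbit β (n + 1 + 1) ≤ β * betaOrbit β (n + 1) :=
          fract_le_self_of_nonneg _ (mul_nonneg hb h0)
      _ ≤ β * (β ^ n * (β - 2)) := mul_le_mul_of_nonneg_left ih hb
      _ = β ^ (n + 1) * (β - 2) := by ring

theorem term_le_eps (β : ℝ) (h2 : 2 < β) (h3 : β < 3) (n : ℕ) :
    betaOrbit β n * (1 - betaOrbit β n) / β ^ n ≤ β - 2 := by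
  cases n with
  | zero => simp [betaOrbit]; linarith
  | succ n =>
    have hb : 0 < β := by linarith
    have h0 := betaOrbit_nonneg β (n + 1)
    have h := betaOrbit_succ_le β h2 h3 n
    rw [div_le_iff₀ (by positivity)]
    have hp : 0 ≤ β ^ n * (β - 2) := mul_nonneg (by positivity) (by linarith)
    rw [pow_succ]
    nlinarith [sq_nonneg (betaOrbit β (n + 1))]

theorem div_pow_le_half (β : ℝ) (h2 : 2 < β) (c : ℝ) (h1 : c ≤ 1) (n : ℕ) :
    c / β ^ n ≤ (1 / 2 : ℝ) ^ n := by
  have hp : (2 : ℝ) ^ n ≤ β ^ n := pow_le_pow_left₀ (by norm_num) h2.le n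
  have h2p : (0 : ℝ) < 2 ^ n := by positivity
  rw [div_pow, one_pow]
  exact div_le_div₀ zero_le_one h1 h2p hp

theorem summable_div_pow (β : ℝ) (h2 : 2 < β) (c : ℕ → ℝ) (h0 : ∀ n, 0 ≤ c n)
    (h1 : ∀ n, c n ≤ 1) : Summable (fun n => c n / β ^ n) := by
  have hb : 0 < β := by linarith
  exact Summable.of_nonneg_of_le (fun n => div_nonneg (h0 n) (by positivity))
    (fun n => div_pow_le_half β h2 (c n) (h1 n) n) summable_geometric_two

theorem tsum_bound (a : ℕ → ℝ) (e : ℝ) (he : 0 < e) (he1 : e < 1) (ha : Summable a)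
    (h1 : ∀ n, a n ≤ e) (h2 : ∀ n, a n ≤ (1 / 2 : ℝ) ^ n) :
    ∑' n, a n ≤ 3 * e * (1 + |Real.log e|) := by
  have hlog : Real.log e < 0 := Real.log_neg he he1
  rw [abs_of_neg hlog]
  set N := ⌈2 * -Real.log e⌉₊ with hN
  have hN1 : 2 * -Real.log e ≤ N := Nat.le_ceil _
  have hN2 : (N : ℝ) < 2 * -Real.log e + 1 := Nat.ceil_lt_add_one (by linarith)
  have hpow : (1 / 2 : ℝ) ^ N ≤ e := by
    rw [← Real.log_le_log_iff (by positivity) he, Real.log_pow, one_div, Real.log_inv]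
    have := Real.log_two_gt_d9
    nlinarith
  rw [← ha.sum_add_tsum_nat_add N]
  have hs : ∑ i ∈ Finset.range N, a i ≤ N * e := by
    calc _ ≤ ∑ i ∈ Finset.range N, e := Finset.sum_le_sum (fun i _ => h1 i)
      _ = N * e := by simp
  have ht : ∑' i, a (i + N) ≤ (1 / 2 : ℝ) ^ N * 2 := by
    have hg : (1 / 2 : ℝ) ^ N * 2 = ∑' n : ℕ, (1 / 2 : ℝ) ^ N * (1 / 2 : ℝ) ^ n := by
      rw [tsum_mul_left, tsum_geometric_two]
    rw [hg]
    refine Summable.tsum_le_tsum (fun i => ?_) ((summable_nat_add_iff N).2 ha)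
      (summable_geometric_two.mul_left _)
    refine (h2 _).trans_eq ?_
    rw [pow_add, mul_comm]
  nlinarith

/-- Log-Lipschitz bound for `1/E(β) − 2` near `β = 2`. -/
theorem stmt5 :
    ∃ K > (0:ℝ), ∀ β : ℝ, 2 < β → β < 3 →
      0 ≤ 1 / Ebeta β - 2 ∧
      1 / Ebeta β - 2 ≤ K * (β - 2) * (1 + |Real.log (β - 2)|) := by
  refine ⟨6, by norm_num, fun β h2 h3 => ?_⟩
  have hb : 0 < β := by linarith
  have h0 := betaOrbit_nonneg β
  have h1 := betaOrbit_le_one β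
  have sB : Summable (fun n => betaOrbit β n / β ^ n) := summable_div_pow β h2 _ h0 h1
  have sA : Summable (fun n => betaOrbit β n ^ 2 / (2 * β ^ n)) := by
    have := (summable_div_pow β h2 (fun n => betaOrbit β n ^ 2 / 2)
      (fun n => by positivity) (fun n => by nlinarith [h0 n, h1 n]))
    refine this.congr (fun n => ?_)
    rw [div_div]
  have hA : 1 / 2 ≤ ∑' n, betaOrbit β n ^ 2 / (2 * β ^ n) := by
    have := sA.le_tsum 0 (fun n _ => by positivity)
    simpa [betaOrbit] using this
  have hdiff : (∑' n, betaOrbit β n / β ^ n) - 2 * ∑' n, betaOrbit β n ^ 2 / (2 * β ^ n)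
      = ∑' n, betaOrbit β n * (1 - betaOrbit β n) / β ^ n := by
    rw [← tsum_mul_left, ← sB.tsum_sub (sA.mul_left 2)]
    refine tsum_congr (fun n => ?_)
    field_simp
  have hn : ∀ n, 0 ≤ betaOrbit β n * (1 - betaOrbit β n) := fun n =>
    mul_nonneg (h0 n) (by linarith [h1 n])
  have hn1 : ∀ n, betaOrbit β n * (1 - betaOrbit β n) ≤ 1 := fun n => by
    nlinarith [h0 n, h1 n]
  have hD0 : 0 ≤ ∑' n, betaOrbit β n * (1 - betaOrbit β n) / β ^ n :=
    tsum_nonneg (fun n => div_nonneg (hn n) (by positivity))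
  have hD := tsum_bound _ (β - 2) (by linarith) (by linarith)
    (summable_div_pow β h2 _ hn hn1) (term_le_eps β h2 h3)
    (fun n => div_pow_le_half β h2 _ (hn1 n) n)
  unfold Ebeta
  rw [← hdiff] at hD hD0
  generalize (∑' n, betaOrbit β n / β ^ n) = B at *
  generalize (∑' n, betaOrbit β n ^ 2 / (2 * β ^ n)) = A at *
  have hA0 : 0 < A := by linarith
  have heq : 1 / (A / B) - 2 = (B - 2 * A) / A := by
    rw [one_div_div]; field_simp
  rw [heq]
  refine ⟨div_nonneg hD0 hA0.le, ?_⟩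
  rw [div_le_iff₀ hA0]
  nlinarith
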